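/- Granted the graded Jacobi identity for the antibracket, the second-order terms of the square Δ_F² of the operator Δ_F = ((-1)^{ε_A}/2)(∂_A + F_A)E^{AB}∂_B equal (1/4) R^{AB} ∂_B ∂_A, where R^{AD} = E^{AB} R_{BC} E^{CD} (-1)^{ε_C} and R_{AB} = (∂_A F_B) - (-1)^{ε_A ε_B}(∂_B F_A) is the curvature of the line bundle connection F_A. Consequently, in the non-degenerate case the second-order terms of Δ_F² vanish if and only if R_{AB} = 0. -/

import Mathlib

/-!
A differential operator in normal-ordered form `∑ h ∂_{a₁} ⋯ ∂_{aₙ}` is controlled by its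
commutators with the coordinates: the Euler operator `T ↦ ∑_a [T, Γ^a] ∂_a` multiplies a
normal-ordered operator of order `n` by `n` (`euler_symb`), and eigenspaces for distinct eigenvalues
are independent (`mem_symb_of_euler`). Hence an operator commuting with all coordinates is a
multiplication (`eq_L_of_comm_coord`), and an operator whose double commutators with coordinates
vanish is of at most first order (`isFirstOrder_of_coord`). The theorem is thereby reduced to
computing `[[Δ_F², Γ^a], Γ^b]`.

Since `[Δ_F, Γ^a] = (-1)^{ε_a} (Γ^a, ·) + Δ_F Γ^a`, this double commutator is an explicit operator
`dblComm`. The Jacobi identity makes it commute with every `Γ^c` (`gcomm_dblComm`), so it is the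
multiplication by its value at `1`. That value is simplified by a second use of the Jacobi identity:
terms quadratic in `∂E` cancel by graded antisymmetry (`sum_DE_DE`), and the derivatives of `F` that
remain combine to `R^{ab} / 2` (`curvUp_eq`, `dblComm_one`). As `R^{ab}` is graded symmetric, the
operator `(1/4) R^{cd} ∂_d ∂_c` has the same double commutators (`gcomm_gcomm_curvUp`). For the
equivalence, `Δ_F²` is of first order iff all `R^{ab}` vanish, and the indices can be lowered with
the inverse of `E`.
-/

open scoped BigOperators

noncomputable section

/-- The sign `(-1)^p` for a parity `p : ZMod 2`, valued in `ℚ`. -/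
def sgn (p : ZMod 2) : ℚ := if p = 0 then 1 else -1

/-- A supercommutative algebra of "functions on a superdomain" with local coordinates
`coord i`, Grassmann parities `ε i`, and left partial derivatives `D i`. -/
structure SuperAlg (ι : Type) [Fintype ι] [DecidableEq ι]
    (A : Type) [Ring A] [Algebra ℚ A] where
  ε : ι → ZMod 2
  hom : ZMod 2 → Submodule ℚ A
  one_mem : (1 : A) ∈ hom 0
  mul_mem : ∀ {p q : ZMod 2} {a b : A}, a ∈ hom p → b ∈ hom q → a * b ∈ hom (p + q)
  supercomm : ∀ {p q : ZMod 2} {a b : A}, a ∈ hom p → b ∈ hom q →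
    a * b = sgn (p * q) • (b * a)
  D : ι → A →ₗ[ℚ] A
  D_mem : ∀ (i : ι) {p : ZMod 2} {a : A}, a ∈ hom p → D i a ∈ hom (p + ε i)
  D_leibniz : ∀ (i : ι) {p : ZMod 2} {a : A} (b : A), a ∈ hom p →
    D i (a * b) = D i a * b + sgn (ε i * p) • (a * D i b)
  D_comm : ∀ (i j : ι) (a : A), D i (D j a) = sgn (ε i * ε j) • D j (D i a)
  coord : ι → A
  coord_mem : ∀ i, coord i ∈ hom (ε i)
  D_coord : ∀ i j, D i (coord j) = if i = j then (1 : A) else 0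

namespace SuperAlg

variable {ι : Type} [Fintype ι] [DecidableEq ι]
variable {A : Type} [Ring A] [Algebra ℚ A]

/-- The operator of left multiplication by `f`. -/
def L (f : A) : A →ₗ[ℚ] A := LinearMap.mulLeft ℚ f

/-- The graded commutator `[T,U] = T∘U - (-1)^{pq} U∘T` of operators of parities `p`, `q`. -/
def gcomm (p q : ZMod 2) (T U : A →ₗ[ℚ] A) : A →ₗ[ℚ] A :=
  T ∘ₗ U - sgn (p * q) • (U ∘ₗ T)

variable (S : SuperAlg ι A)

/-- The bracket `(f,g) = (f ∂⃖_A) M^{AB} (∂_B g)` built from the matrix `M`,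
for `f` homogeneous of parity `pf`; the right derivative is expressed through
the left one via `f ∂⃖_A = (-1)^{ε_A (ε_f + 1)} ∂_A f`. -/
def brkt (M : ι → ι → A) (pf : ZMod 2) (f g : A) : A :=
  ∑ a, ∑ b, sgn (S.ε a * (pf + 1)) • (S.D a f * (M a b * S.D b g))

/-- The first-order operator `(x, ·)` (for Grassmann-odd `x`), built from the matrix `M`. -/
def Hop (M : ι → ι → A) (x : A) : A →ₗ[ℚ] A :=
  ∑ a, ∑ b, L (S.D a x) ∘ₗ L (M a b) ∘ₗ S.D b

/-- The Laplacian `((-1)^{ε_A}/2)(∂_A + F_A) M^{AB} ∂_B`. -/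
def lap (F : ι → A) (M : ι → ι → A) : A →ₗ[ℚ] A :=
  (1/2 : ℚ) • ∑ a, ∑ b, sgn (S.ε a) •
    ((S.D a ∘ₗ L (M a b) ∘ₗ S.D b) + (L (F a) ∘ₗ L (M a b) ∘ₗ S.D b))

/-- The curvature `R_{AB} = (∂_A F_B) - (-1)^{ε_A ε_B}(∂_B F_A)` of a line bundle
connection `F`. -/
def curv (F : ι → A) (a b : ι) : A :=
  S.D a (F b) - sgn (S.ε a * S.ε b) • S.D b (F a)

/-- The raised-index curvature `R^{AD} = E^{AB} R_{BC} E^{CD} (-1)^{ε_C}`. -/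
def curvUp (E : ι → ι → A) (F : ι → A) (a d : ι) : A :=
  ∑ b, ∑ c, sgn (S.ε c) • (E a b * (S.curv F b c * E c d))

/-- The graded Jacobi identity for the antibracket, on homogeneous functions. -/
def JacobiId (E : ι → ι → A) : Prop :=
  ∀ (pf pg ph : ZMod 2) (f g h : A),
    f ∈ S.hom pf → g ∈ S.hom pg → h ∈ S.hom ph →
      sgn ((pf + 1) * (ph + 1)) • S.brkt E pf f (S.brkt E pg g h)
      + sgn ((pg + 1) * (pf + 1)) • S.brkt E pg g (S.brkt E ph h f)
      + sgn ((ph + 1) * (pg + 1)) • S.brkt E ph h (S.brkt E pf f g) = 0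

/-- The closedness relation `Σ_{cycl. A,B,C} (-1)^{ε_A ε_C} (∂_A E_{BC}) = 0`
for the two-form with components `Einv`. -/
def ClosedId (Einv : ι → ι → A) : Prop :=
  ∀ a b c : ι,
    sgn (S.ε a * S.ε c) • S.D a (Einv b c)
    + sgn (S.ε b * S.ε a) • S.D b (Einv c a)
    + sgn (S.ε c * S.ε b) • S.D c (Einv a b) = 0

/-- The Jacobi identity `Σ_{cycl. A,B,C} (-1)^{(ε_A+1)(ε_C+1)} E^{AD} (∂_D E^{BC}) = 0`
in terms of the matrix `E^{AB}`. -/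
def EJacobiId (E : ι → ι → A) : Prop :=
  ∀ a b c : ι,
    ∑ d, (sgn ((S.ε a + 1) * (S.ε c + 1)) • (E a d * S.D d (E b c))
      + sgn ((S.ε b + 1) * (S.ε a + 1)) • (E b d * S.D d (E c a))
      + sgn ((S.ε c + 1) * (S.ε b + 1)) • (E c d * S.D d (E a b))) = 0

/-- `E` is a non-degenerate graded-skewsymmetric (2,0)-tensor with inverse `Einv`. -/
structure AntiSymp (E Einv : ι → ι → A) : Prop where
  E_mem : ∀ a b, E a b ∈ S.hom (S.ε a + S.ε b + 1)
  E_skew : ∀ a b, E a b = - sgn ((S.ε a + 1) * (S.ε b + 1)) • E b a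
  Einv_mem : ∀ a b, Einv a b ∈ S.hom (S.ε a + S.ε b + 1)
  Einv_skew : ∀ a b, Einv a b = - sgn (S.ε a * S.ε b) • Einv b a
  mul_inv : ∀ a c, ∑ b, E a b * Einv b c = if a = c then (1 : A) else 0
  inv_mul : ∀ a c, ∑ b, Einv a b * E b c = if a = c then (1 : A) else 0

/-- An operator `T` of parity `pT` is of at most first order iff all its double graded
commutators with left multiplication operators vanish. -/
def IsFirstOrder (pT : ZMod 2) (T : A →ₗ[ℚ] A) : Prop :=
  ∀ (pf pg : ZMod 2) (f g : A), f ∈ S.hom pf → g ∈ S.hom pg →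
    gcomm (pT + pf) pg (gcomm pT pf T (L f)) (L g) = 0

/-- The third-order terms of an operator `T` of parity `pT` vanish iff all its triple
graded commutators with left multiplication operators vanish. -/
def ThirdOrderVanish (pT : ZMod 2) (T : A →ₗ[ℚ] A) : Prop :=
  ∀ (pf pg ph : ZMod 2) (f g h : A),
    f ∈ S.hom pf → g ∈ S.hom pg → h ∈ S.hom ph →
      gcomm (pT + pf + pg) ph
        (gcomm (pT + pf) pg (gcomm pT pf T (L f)) (L g)) (L h) = 0

/-- `ν_F^{(0)} = ((-1)^{ε_A}/4)(∂_A + F_A/2)(E^{AB} F_B)`. -/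
def nuF0 (E : ι → ι → A) (F : ι → A) : A :=
  (1/4 : ℚ) • ∑ a, ∑ b, sgn (S.ε a) •
    (S.D a (E a b * F b) + (1/2 : ℚ) • (F a * (E a b * F b)))

/-- `ν^{(1)} = (-1)^{ε_A} (∂_B ∂_A E^{AB})`. -/
def nu1 (E : ι → ι → A) : A :=
  ∑ a, ∑ b, sgn (S.ε a) • S.D b (S.D a (E a b))

/-- `ν^{(2)} = (-1)^{ε_A ε_C} (∂_D E^{AB}) E_{BC} (∂_A E^{CD})`. -/
def nu2 (E Einv : ι → ι → A) : A :=
  ∑ a, ∑ b, ∑ c, ∑ d, sgn (S.ε a * S.ε c) •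
    (S.D d (E a b) * (Einv b c * S.D a (E c d)))

/-- `ν_F = ν_F^{(0)} + ν^{(1)}/8 - ν^{(2)}/24`. -/
def nuF (E Einv : ι → ι → A) (F : ι → A) : A :=
  S.nuF0 E F + (1/8 : ℚ) • S.nu1 E - (1/24 : ℚ) • S.nu2 E Einv

/-- The divergence `div_1 X = (-1)^{ε_A} (∂_A X^A)`. -/
def div1 (X : ι → A) : A := ∑ a, sgn (S.ε a) • S.D a (X a)

/-- A form variation (infinitesimal coordinate transformation `δΓ^A = X^A`, compared
at the same argument): an even derivation commuting with the partial derivatives. -/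
structure FormVar (X : ι → A) (δv : A →ₗ[ℚ] A) : Prop where
  deriv : ∀ a b : A, δv (a * b) = δv a * b + a * δv b
  commD : ∀ (i : ι) (a : A), δv (S.D i a) = S.D i (δv a)
  X_mem : ∀ i, X i ∈ S.hom (S.ε i)

/-- The form variation of a (2,0)-tensor `E^{AB}` under `δΓ^A = X^A`:
`δE^{AB} = (X^A ∂⃖_C) E^{CB} + E^{AC}(∂_C X^B) - X^C (∂_C E^{AB})`. -/
def VarE (X : ι → A) (δv : A →ₗ[ℚ] A) (E : ι → ι → A) : Prop :=
  ∀ a b, δv (E a b) =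
    (∑ c, sgn (S.ε c * (S.ε a + 1)) • (S.D c (X a) * E c b))
    + (∑ c, E a c * S.D c (X b))
    - ∑ c, X c * S.D c (E a b)

/-- The form variation of a line bundle connection `F_A` under `δΓ^A = X^A`:
`δF_A = -(∂_A X^B) F_B - ∂_A(div_1 X) - X^C (∂_C F_A)`. -/
def VarF (X : ι → A) (δv : A →ₗ[ℚ] A) (F : ι → A) : Prop :=
  ∀ a, δv (F a) =
    - (∑ b, S.D a (X b) * F b) - S.D a (S.div1 X) - ∑ c, X c * S.D c (F a)

/-- Khudaverdian–Voronov's odd quantity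
`ν(F¹;F²,E) = ((-1)^{ε_A}/4)(∂_A + (F¹_A+F²_A)/2)(E^{AB}(F¹_B - F²_B))`. -/
def nu12 (E : ι → ι → A) (F1 F2 : ι → A) : A :=
  (1/4 : ℚ) • ∑ a, ∑ b, sgn (S.ε a) •
    (S.D a (E a b * (F1 b - F2 b))
      + (1/2 : ℚ) • ((F1 a + F2 a) * (E a b * (F1 b - F2 b))))

/-- The odd Laplacian `Δ_ρ = ((-1)^{ε_A}/(2ρ)) ∂_A ρ E^{AB} ∂_B` for a density `ρ`
with inverse `ρinv`. -/
def lapRho (E : ι → ι → A) (ρ ρinv : A) : A →ₗ[ℚ] A :=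
  (1/2 : ℚ) • ∑ a, ∑ b, sgn (S.ε a) •
    (L ρinv ∘ₗ S.D a ∘ₗ L ρ ∘ₗ L (E a b) ∘ₗ S.D b)

/-- `ν_ρ^{(0)} = (Δ_1 √ρ)/√ρ`, where `sq = √ρ` and `sqinv = 1/√ρ`. -/
def nuRho0 (E : ι → ι → A) (sq sqinv : A) : A :=
  sqinv * (S.lap (fun _ => (0 : A)) E sq)

/-- `ν_ρ = ν_ρ^{(0)} + ν^{(1)}/8 - ν^{(2)}/24`. -/
def nuRho (E Einv : ι → ι → A) (sq sqinv : A) : A :=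
  S.nuRho0 E sq sqinv + (1/8 : ℚ) • S.nu1 E - (1/24 : ℚ) • S.nu2 E Einv

/-- Khudaverdian's operator `Δ_E = Δ_1 + ν^{(1)}/8 - ν^{(2)}/24`. -/
def lapE (E Einv : ι → ι → A) : A →ₗ[ℚ] A :=
  S.lap (fun _ => (0 : A)) E + L ((1/8 : ℚ) • S.nu1 E - (1/24 : ℚ) • S.nu2 E Einv)

/-- The reordered Christoffel symbols `Γ^A{}_{BC} = (-1)^{ε_A ε_B} Γ_B{}^A{}_C`. -/
def Gup (Gm : ι → ι → ι → A) (a b c : ι) : A := sgn (S.ε a * S.ε b) • Gm b a c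

/-- The reordered Riemann curvature tensor
`R^A{}_{BCD} = (-1)^{ε_A ε_B}(∂_B Γ^A{}_{CD}) + Γ^A{}_{BE} Γ^E{}_{CD} - (-1)^{ε_B ε_C}(B ↔ C)`,
expressed through the reordered Christoffel symbols `Gu = Γ^·{}_{··}`. -/
def riemRe (Gu : ι → ι → ι → A) (a b c d : ι) : A :=
  sgn (S.ε a * S.ε b) • S.D b (Gu a c d) + (∑ e, Gu a b e * Gu e c d)
  - sgn (S.ε b * S.ε c) •
      (sgn (S.ε a * S.ε c) • S.D c (Gu a b d) + ∑ e, Gu a c e * Gu e b d)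

/-- The Ricci tensor `R_{AB} = R^C{}_{CAB}`. -/
def ricci (Gu : ι → ι → ι → A) (a b : ι) : A := ∑ c, S.riemRe Gu c c a b

/-- The odd scalar curvature `R = R_{AB} E^{BA}`. -/
def scalarR (Gu : ι → ι → ι → A) (E : ι → ι → A) : A :=
  ∑ a, ∑ b, S.ricci Gu a b * E b a

/-- The Riemann curvature tensor
`R_{AB}{}^C{}_D = (∂_A Γ_B{}^C{}_D) + (-1)^{ε_B ε_C} Γ_A{}^C{}_E Γ^E{}_{BD} - (-1)^{ε_A ε_B}(A ↔ B)`,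
built from the Christoffel symbols `Gm = Γ_·{}^·{}_·`. -/
def riem (Gm : ι → ι → ι → A) (a b c d : ι) : A :=
  S.D a (Gm b c d) + sgn (S.ε b * S.ε c) • (∑ e, Gm a c e * S.Gup Gm e b d)
  - sgn (S.ε a * S.ε b) •
      (S.D b (Gm a c d) + sgn (S.ε a * S.ε c) • ∑ e, Gm b c e * S.Gup Gm e a d)

/-- The Christoffel symbols with three lower indices,
`Γ_{ABC} = E_{AD} Γ^D{}_{BC} (-1)^{ε_B}`, built from `Gu = Γ^·{}_{··}`. -/
def Glow (Einv : ι → ι → A) (Gu : ι → ι → ι → A) (a b c : ι) : A :=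
  sgn (S.ε b) • ∑ d, Einv a d * Gu d b c

/-- `γ_{ABC} = Γ_{ABC} - (1/3)(E_{AB} ∂⃖_C + E_{AC} ∂⃖_B (-1)^{ε_B ε_C})`. -/
def gam (Einv : ι → ι → A) (Gu : ι → ι → ι → A) (a b c : ι) : A :=
  S.Glow Einv Gu a b c
  - (1/3 : ℚ) • (sgn (S.ε c * (S.ε a + S.ε b)) • S.D c (Einv a b)
      + sgn (S.ε b * S.ε c) • (sgn (S.ε b * (S.ε a + S.ε c)) • S.D b (Einv a c)))

end SuperAlg


/-! ### Signs, and differential operators determined by their commutators with coordinates -/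

namespace SuperAlg

theorem sgn_zero : sgn 0 = 1 := by simp [sgn]

theorem sgn_one : sgn 1 = -1 := by simp [sgn]

theorem par (p : ZMod 2) : p = 0 ∨ p = 1 := by revert p; decide

theorem one_add_one' : (1 : ZMod 2) + 1 = 0 := by decide

theorem sgn_add (p q : ZMod 2) : sgn (p + q) = sgn p * sgn q := by
  rcases par p with rfl | rfl <;> rcases par q with rfl | rfl <;>
    simp [sgn_zero, sgn_one, one_add_one']

section

variable {ι : Type} [Fintype ι] [DecidableEq ι] {A : Type} [Ring A] [Algebra ℚ A]

theorem L_apply (f v : A) : L f v = f * v := rfl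

theorem gcomm_apply (p q : ZMod 2) (T U : A →ₗ[ℚ] A) (v : A) :
    gcomm p q T U v = T (U v) - sgn (p * q) • U (T v) := rfl

theorem gcomm_sub_left (p q : ZMod 2) (T T' U : A →ₗ[ℚ] A) :
    gcomm p q (T - T') U = gcomm p q T U - gcomm p q T' U := by
  ext v; simp only [gcomm_apply, LinearMap.sub_apply, map_sub]; module

theorem gcomm_add_left (p q : ZMod 2) (T T' U : A →ₗ[ℚ] A) :
    gcomm p q (T + T') U = gcomm p q T U + gcomm p q T' U := by
  ext v; simp only [gcomm_apply, LinearMap.add_apply, map_add]; module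

theorem gcomm_smul_left (p q : ZMod 2) (r : ℚ) (T U : A →ₗ[ℚ] A) :
    gcomm p q (r • T) U = r • gcomm p q T U := by
  ext v; simp only [gcomm_apply, LinearMap.smul_apply, map_smul]; module

theorem gcomm_zero_left (p q : ZMod 2) (U : A →ₗ[ℚ] A) :
    gcomm p q 0 U = 0 := by
  ext v; simp [gcomm_apply]

variable (S : SuperAlg ι A)

/-- Differential operators of parity `p` that are homogeneous of order `n` in normal-ordered
form: `ℚ`-linear combinations of `h ∂_{a₁} ⋯ ∂_{aₙ}` with homogeneous coefficients `h`. -/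
def symb : ℕ → ZMod 2 → Submodule ℚ (A →ₗ[ℚ] A)
  | 0, p => (S.hom p).map (LinearMap.mul ℚ A)
  | n + 1, p => Submodule.span ℚ {T | ∃ a, ∃ U ∈ symb n (p + S.ε a), T = U ∘ₗ S.D a}

/-- The differential operators of parity `p`: finite sums of normal-ordered ones of any order. -/
def diffOp (p : ZMod 2) : Submodule ℚ (A →ₗ[ℚ] A) := ⨆ n, S.symb n p

/-- The Euler operator `T ↦ ∑_a [T, Γ^a] ∂_a` on operators of parity `p`; it is linear, and
multiplies a normal-ordered operator of order `n` by `n`. -/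
def euler (p : ZMod 2) : Module.End ℚ (A →ₗ[ℚ] A) where
  toFun T := ∑ a, gcomm p (S.ε a) T (L (S.coord a)) ∘ₗ S.D a
  map_add' T U := by
    simp only [gcomm_add_left, LinearMap.add_comp, Finset.sum_add_distrib]
  map_smul' r T := by
    simp only [gcomm_smul_left, LinearMap.smul_comp, Finset.smul_sum, RingHom.id_apply]

theorem euler_apply (p : ZMod 2) (T : A →ₗ[ℚ] A) :
    S.euler p T = ∑ a, gcomm p (S.ε a) T (L (S.coord a)) ∘ₗ S.D a := rfl

theorem mem_symb_zero {p : ZMod 2} {T : A →ₗ[ℚ] A} :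
    T ∈ S.symb 0 p ↔ ∃ h ∈ S.hom p, L h = T := Iff.rfl

theorem L_mem_symb {p : ZMod 2} {h : A} (hh : h ∈ S.hom p) : L h ∈ S.symb 0 p :=
  S.mem_symb_zero.2 ⟨h, hh, rfl⟩

theorem comp_D_mem_symb {n : ℕ} {p q : ZMod 2} (a : ι) {T : A →ₗ[ℚ] A} (hT : T ∈ S.symb n q)
    (hp : p = q + S.ε a) : T ∘ₗ S.D a ∈ S.symb (n + 1) p := by
  refine Submodule.subset_span ⟨a, T, ?_, rfl⟩
  rwa [hp, add_assoc, CharTwo.add_self_eq_zero, add_zero]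

theorem gcomm_L_L {p q : ZMod 2} {f g : A} (hf : f ∈ S.hom p) (hg : g ∈ S.hom q) :
    gcomm p q (L f) (L g) = 0 := by
  ext v
  simp only [gcomm_apply, L_apply, LinearMap.zero_apply]
  rw [← mul_assoc, S.supercomm hf hg, smul_mul_assoc, mul_assoc, sub_self]

theorem D_coord_mul (a b : ι) (v : A) :
    S.D b (S.coord a * v)
      = (if b = a then v else 0) + sgn (S.ε b * S.ε a) • (S.coord a * S.D b v) := by
  rw [S.D_leibniz b v (S.coord_mem a), S.D_coord]
  split_ifs <;> simp

theorem euler_symb (n : ℕ) : ∀ (p : ZMod 2) (T : A →ₗ[ℚ] A), T ∈ S.symb n p →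
    S.euler p T = (n : ℚ) • T := by
  induction n with
  | zero =>
    intro p T hT
    obtain ⟨h, hh, rfl⟩ := S.mem_symb_zero.1 hT
    simp [euler_apply, S.gcomm_L_L hh (S.coord_mem _)]
  | succ n ih =>
    intro p T hT
    induction hT using Submodule.span_induction with
    | zero => simp
    | add x y _ _ hx hy => rw [map_add, hx, hy, smul_add]
    | smul r x _ hx => rw [map_smul, hx, smul_comm]
    | mem x hx =>
      obtain ⟨b, U, hU, rfl⟩ := hx
      have key : ∀ a, gcomm p (S.ε a) (U ∘ₗ S.D b) (L (S.coord a)) ∘ₗ S.D a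
          = (if b = a then U ∘ₗ S.D a else 0)
            + (gcomm (p + S.ε b) (S.ε a) U (L (S.coord a)) ∘ₗ S.D a) ∘ₗ S.D b := by
        intro a
        ext v
        have e : S.D b (S.D a v) = sgn (S.ε b * S.ε a) • S.D a (S.D b v) := S.D_comm b a v
        simp only [gcomm_apply, L_apply, LinearMap.comp_apply, LinearMap.add_apply,
          D_coord_mul, map_add, e, map_smul, mul_smul_comm]
        have e2 : U (if b = a then S.D a v else 0)
            = (if b = a then U ∘ₗ S.D a else 0 : A →ₗ[ℚ] A) v := by
          split_ifs <;> simp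
        rw [e2]
        rcases par (S.ε a) with h | h <;> rcases par (S.ε b) with h' | h' <;>
          rcases par p with h'' | h'' <;>
          simp only [h, h', h'', mul_one, mul_zero, add_zero, zero_add, one_add_one',
            sgn_zero, sgn_one] <;> module
      have ihU := ih _ U hU
      rw [euler_apply] at ihU ⊢
      rw [Finset.sum_congr rfl (fun a _ => key a), Finset.sum_add_distrib, Finset.sum_ite_eq,
        if_pos (Finset.mem_univ _)]
      have e : ∀ X : ι → (A →ₗ[ℚ] A), ∑ a, X a ∘ₗ S.D b = (∑ a, X a) ∘ₗ S.D b := fun X => by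
        ext v; simp
      rw [e, ihU, LinearMap.smul_comp]
      push_cast
      module

/-- Inside the differential operators, the eigenspaces of the Euler operator are exactly the
homogeneous normal-ordered operators, by independence of eigenspaces. -/
theorem mem_symb_of_euler {p : ZMod 2} {T : A →ₗ[ℚ] A} (hT : T ∈ S.diffOp p) (k : ℕ)
    (hk : S.euler p T = (k : ℚ) • T) : T ∈ S.symb k p := by
  have hle : ∀ n, S.symb n p ≤ (S.euler p).eigenspace (n : ℚ) := fun n U hU =>
    Module.End.mem_eigenspace_iff.2 (S.euler_symb n p U hU)
  have hsplit : S.diffOp p ≤ S.symb k p ⊔ ⨆ n, ⨆ (_ : n ≠ k), S.symb n p := by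
    refine iSup_le fun n => ?_
    by_cases hn : n = k
    · subst hn; exact le_sup_left
    · exact le_sup_of_le_right (le_iSup₂_of_le n hn le_rfl)
  obtain ⟨U, hU, V, hV, rfl⟩ := Submodule.mem_sup.1 (hsplit hT)
  have hV1 : V ∈ (S.euler p).eigenspace (k : ℚ) := by
    have := Submodule.sub_mem _ (Module.End.mem_eigenspace_iff.2 hk) (hle k hU)
    simpa using this
  have hV2 : V ∈ ⨆ μ, ⨆ (_ : μ ≠ (k : ℚ)), (S.euler p).eigenspace μ := by
    refine (iSup₂_le fun n hn => ?_ : (⨆ n, ⨆ (_ : n ≠ k), S.symb n p) ≤ _) hV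
    exact (hle n).trans (le_iSup₂_of_le (n : ℚ) (by exact_mod_cast hn) le_rfl)
  have := Submodule.disjoint_def.1 ((Module.End.eigenspaces_iSupIndep (S.euler p)) (k : ℚ)) V
    hV1 hV2
  rw [this, add_zero]
  exact hU

theorem symb_le (n : ℕ) (p : ZMod 2) : S.symb n p ≤ S.diffOp p := le_iSup (S.symb · p) n

theorem diffOp_induction {p : ZMod 2} {P : (A →ₗ[ℚ] A) → Prop} {T : A →ₗ[ℚ] A}
    (hT : T ∈ S.diffOp p) (h : ∀ n, ∀ U ∈ S.symb n p, P U) (h0 : P 0)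
    (hadd : ∀ U V, P U → P V → P (U + V)) : P T :=
  Submodule.iSup_induction _ (motive := P) hT h h0 hadd

theorem euler_mem {p : ZMod 2} {T : A →ₗ[ℚ] A} (hT : T ∈ S.diffOp p) :
    S.euler p T ∈ S.diffOp p := by
  refine S.diffOp_induction (P := fun T => S.euler p T ∈ S.diffOp p) hT ?_ (by simp) ?_
  · intro n U hU
    rw [S.euler_symb n p U hU]
    exact Submodule.smul_mem _ _ (S.symb_le n p hU)
  · intro U V hU hV
    rw [map_add]
    exact Submodule.add_mem _ hU hV

theorem comp_D_mem {p q : ZMod 2} (a : ι) {T : A →ₗ[ℚ] A} (hT : T ∈ S.diffOp q)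
    (hp : p = q + S.ε a) : T ∘ₗ S.D a ∈ S.diffOp p := by
  refine S.diffOp_induction (P := fun T => T ∘ₗ S.D a ∈ S.diffOp p) hT ?_ (by simp) ?_
  · exact fun n U hU => S.symb_le (n + 1) p (S.comp_D_mem_symb a hU hp)
  · intro U V hU hV
    rw [LinearMap.add_comp]
    exact Submodule.add_mem _ hU hV

theorem L_comp_mem_symb {q : ZMod 2} {h : A} (hh : h ∈ S.hom q) (n : ℕ) :
    ∀ (p : ZMod 2) (T : A →ₗ[ℚ] A), T ∈ S.symb n p → L h ∘ₗ T ∈ S.symb n (q + p) := by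
  induction n with
  | zero =>
    intro p T hT
    obtain ⟨g, hg, rfl⟩ := S.mem_symb_zero.1 hT
    refine S.mem_symb_zero.2 ⟨h * g, S.mul_mem hh hg, ?_⟩
    ext v
    simp [L_apply, mul_assoc]
  | succ n ih =>
    intro p T hT
    induction hT using Submodule.span_induction with
    | zero => simp
    | add x y _ _ hx hy => rw [LinearMap.comp_add]; exact Submodule.add_mem _ hx hy
    | smul r x _ hx => rw [LinearMap.comp_smul]; exact Submodule.smul_mem _ _ hx
    | mem x hx =>
      obtain ⟨b, U, hU, rfl⟩ := hx
      rw [← LinearMap.comp_assoc]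
      refine S.comp_D_mem_symb b (ih _ U hU) ?_
      rw [← add_assoc, add_assoc, CharTwo.add_self_eq_zero, add_zero]

theorem L_comp_mem {p q r : ZMod 2} {h : A} (hh : h ∈ S.hom q) {T : A →ₗ[ℚ] A}
    (hT : T ∈ S.diffOp p) (hr : r = q + p) : L h ∘ₗ T ∈ S.diffOp r := by
  subst hr
  refine S.diffOp_induction (P := fun T => L h ∘ₗ T ∈ S.diffOp (q + p)) hT ?_ (by simp) ?_
  · exact fun n U hU => S.symb_le n _ (S.L_comp_mem_symb hh n p U hU)
  · intro U V hU hV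
    rw [LinearMap.comp_add]
    exact Submodule.add_mem _ hU hV

theorem D_comp_mem {p r : ZMod 2} (a : ι) {T : A →ₗ[ℚ] A}
    (hT : T ∈ S.diffOp p) (hr : r = S.ε a + p) : S.D a ∘ₗ T ∈ S.diffOp r := by
  subst hr
  have key : ∀ (n : ℕ) (p : ZMod 2) (T : A →ₗ[ℚ] A), T ∈ S.symb n p →
      S.D a ∘ₗ T ∈ S.diffOp (S.ε a + p) := by
    intro n
    induction n with
    | zero =>
      intro p T hT
      obtain ⟨g, hg, rfl⟩ := S.mem_symb_zero.1 hT
      have e : S.D a ∘ₗ L g = L (S.D a g) + sgn (S.ε a * p) • (L g ∘ₗ S.D a) := by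
        ext v
        simp [L_apply, S.D_leibniz a v hg]
      rw [e]
      refine Submodule.add_mem _ (S.symb_le 0 _ (S.L_mem_symb ?_)) (Submodule.smul_mem _ _ ?_)
      · rw [add_comm]; exact S.D_mem a hg
      · exact S.comp_D_mem a (S.symb_le 0 _ (S.L_mem_symb hg)) (add_comm _ _)
    | succ n ih =>
      intro p T hT
      induction hT using Submodule.span_induction with
      | zero => simp
      | add x y _ _ hx hy => rw [LinearMap.comp_add]; exact Submodule.add_mem _ hx hy
      | smul r x _ hx => rw [LinearMap.comp_smul]; exact Submodule.smul_mem _ _ hx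
      | mem x hx =>
        obtain ⟨b, U, hU, rfl⟩ := hx
        rw [← LinearMap.comp_assoc]
        refine S.comp_D_mem b (ih _ U hU) ?_
        rw [← add_assoc, add_assoc, CharTwo.add_self_eq_zero, add_zero]
  refine S.diffOp_induction (P := fun T => S.D a ∘ₗ T ∈ S.diffOp (S.ε a + p)) hT ?_ (by simp) ?_
  · exact fun n U hU => key n p U hU
  · intro U V hU hV
    rw [LinearMap.comp_add]
    exact Submodule.add_mem _ hU hV

theorem id_mem : (LinearMap.id : A →ₗ[ℚ] A) ∈ S.diffOp 0 := by
  refine S.symb_le 0 0 (S.mem_symb_zero.2 ⟨1, S.one_mem, ?_⟩)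
  ext v
  simp [L_apply]

/-- A differential operator commuting with all coordinates is multiplication by a function. -/
theorem eq_L_of_comm_coord {p : ZMod 2} {T : A →ₗ[ℚ] A} (hT : T ∈ S.diffOp p)
    (h : ∀ a, gcomm p (S.ε a) T (L (S.coord a)) = 0) : T = L (T 1) := by
  have h0 : S.euler p T = ((0 : ℕ) : ℚ) • T := by simp [euler_apply, h]
  obtain ⟨g, _, rfl⟩ := S.mem_symb_zero.1 (S.mem_symb_of_euler hT 0 h0)
  simp [L_apply]

theorem gcomm_symb_zero {p q : ZMod 2} {T : A →ₗ[ℚ] A} (hT : T ∈ S.symb 0 p) {f : A}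
    (hf : f ∈ S.hom q) : gcomm p q T (L f) = 0 := by
  obtain ⟨g, hg, rfl⟩ := S.mem_symb_zero.1 hT
  exact S.gcomm_L_L hg hf

theorem gcomm_symb_one {p q : ZMod 2} {T : A →ₗ[ℚ] A} (hT : T ∈ S.symb 1 p) {f : A}
    (hf : f ∈ S.hom q) : gcomm p q T (L f) ∈ S.symb 0 (p + q) := by
  induction hT using Submodule.span_induction with
  | zero => rw [gcomm_zero_left]; exact Submodule.zero_mem _
  | add x y _ _ hx hy => rw [gcomm_add_left]; exact Submodule.add_mem _ hx hy
  | smul r x _ hx => rw [gcomm_smul_left]; exact Submodule.smul_mem _ _ hx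
  | mem x hx =>
    obtain ⟨b, U, hU, rfl⟩ := hx
    obtain ⟨g, hg, rfl⟩ := S.mem_symb_zero.1 hU
    have e : p + q = (p + S.ε b) + (q + S.ε b) := by
      rcases par (S.ε b) with h | h <;> rcases par p with h' | h' <;>
          rcases par q with h'' | h'' <;> rw [h, h', h''] <;> decide
    refine S.mem_symb_zero.2 ⟨g * S.D b f, e ▸ S.mul_mem hg (S.D_mem b hf), ?_⟩
    ext v
    have e1 : f * (g * S.D b v) = sgn (q * (p + S.ε b)) • (g * (f * S.D b v)) := by
      rw [← mul_assoc, S.supercomm hf hg, smul_mul_assoc, mul_assoc]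
    simp only [gcomm_apply, L_apply, LinearMap.comp_apply, S.D_leibniz b v hf, e1, mul_add,
      mul_smul_comm, mul_assoc]
    rcases par (S.ε b) with h | h <;> rcases par p with h' | h' <;>
      rcases par q with h'' | h'' <;>
      simp only [h, h', h'', mul_one, mul_zero, add_zero, zero_add, one_add_one',
        sgn_zero, sgn_one] <;> module

/-- It suffices to test the first-order property of a differential operator on coordinates. -/
theorem isFirstOrder_of_coord {p : ZMod 2} {T : A →ₗ[ℚ] A} (hT : T ∈ S.diffOp p)
    (h : ∀ a b, gcomm (p + S.ε a) (S.ε b) (gcomm p (S.ε a) T (L (S.coord a)))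
      (L (S.coord b)) = 0) : S.IsFirstOrder p T := by
  -- the hypothesis says that the Euler operator acts on its own value at `T` as the identity
  have hEE : S.euler p (S.euler p T) = S.euler p T := by
    conv_lhs => rw [S.euler_apply p T, map_sum]
    rw [S.euler_apply p T]
    refine Finset.sum_congr rfl fun a _ => ?_
    rw [euler_apply]
    set U := gcomm p (S.ε a) T (L (S.coord a)) with hU
    have key : ∀ b, gcomm p (S.ε b) (U ∘ₗ S.D a) (L (S.coord b)) ∘ₗ S.D b
        = if a = b then U ∘ₗ S.D b else 0 := by
      intro b
      ext v
      have e : U (S.coord b * S.D a (S.D b v))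
          = sgn ((p + S.ε a) * S.ε b) • (S.coord b * U (S.D a (S.D b v))) := by
        have := LinearMap.congr_fun (h a b) (S.D a (S.D b v))
        rw [gcomm_apply, LinearMap.zero_apply, sub_eq_zero] at this
        exact this
      have e2 : U (if a = b then S.D b v else 0)
            = (if a = b then U ∘ₗ S.D b else 0 : A →ₗ[ℚ] A) v := by
          split_ifs <;> simp
      simp only [gcomm_apply, L_apply, LinearMap.comp_apply, D_coord_mul, map_add, map_smul, e,
        e2]
      rcases par (S.ε a) with h | h <;> rcases par (S.ε b) with h' | h' <;>
        rcases par p with h'' | h'' <;>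
        simp only [h, h', h'', mul_one, mul_zero, add_zero, zero_add, one_add_one',
          sgn_zero, sgn_one] <;> module
    rw [Finset.sum_congr rfl (fun b _ => key b), Finset.sum_ite_eq, if_pos (Finset.mem_univ _)]
  have h1 : S.euler p T ∈ S.symb 1 p :=
    S.mem_symb_of_euler (S.euler_mem hT) 1 (by simpa using hEE)
  have h0 : T - S.euler p T ∈ S.symb 0 p :=
    S.mem_symb_of_euler (Submodule.sub_mem _ hT (S.euler_mem hT)) 0 (by simp [map_sub, hEE])
  intro pf pg f g hf hg
  have e : T = (T - S.euler p T) + S.euler p T := by simp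
  rw [e, gcomm_add_left, S.gcomm_symb_zero h0 hf, zero_add]
  exact S.gcomm_symb_zero (S.gcomm_symb_one h1 hf) hg

end

end SuperAlg

/-! ### The symbol of the square of the Laplacian on coordinates -/

namespace SuperAlg

section

variable {ι : Type} [Fintype ι] [DecidableEq ι] {A : Type} [Ring A] [Algebra ℚ A]
  (S : SuperAlg ι A)

/-- The Hamiltonian vector field `(Γ^a, ·) = ∑_d E^{ad} ∂_d` of the coordinate `Γ^a`, a
derivation of parity `ε_a + 1`. -/
def ham (E : ι → ι → A) (a : ι) : A →ₗ[ℚ] A := ∑ d, L (E a d) ∘ₗ S.D d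

/-- The function `Δ_F Γ^a = ∑_c ((-1)^{ε_c}/2) (∂_c + F_c) E^{ca}`. -/
def lapCoord (F : ι → A) (E : ι → ι → A) (a : ι) : A :=
  (1/2 : ℚ) • ∑ c, sgn (S.ε c) • (S.D c (E c a) + F c * E c a)

/-- The first-order operator `[Δ_F, Γ^a] = (-1)^{ε_a} (Γ^a, ·) + Δ_F Γ^a`. -/
def lapComm (F : ι → A) (E : ι → ι → A) (a : ι) : A →ₗ[ℚ] A :=
  sgn (S.ε a) • S.ham E a + L (S.lapCoord F E a)

/-- An explicit form of the double commutator `[[Δ_F², Γ^a], Γ^b]`. -/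
def dblComm (F : ι → A) (E : ι → ι → A) (a b : ι) : A →ₗ[ℚ] A :=
  sgn (S.ε a) • (S.lap F E ∘ₗ L (E a b))
    + sgn ((1 + S.ε a) * S.ε b) • (S.lapComm F E b ∘ₗ S.lapComm F E a)
    + sgn (S.ε a) • (S.lapComm F E a ∘ₗ S.lapComm F E b)
    + sgn (S.ε b) • (L (E a b) ∘ₗ S.lap F E)

variable {E Einv : ι → ι → A} {F : ι → A}

theorem ham_apply (a : ι) (v : A) : S.ham E a v = ∑ d, E a d * S.D d v := by
  simp [ham, L_apply]

theorem lapComm_apply (a : ι) (v : A) : S.lapComm F E a v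
    = sgn (S.ε a) • S.ham E a v + S.lapCoord F E a * v := rfl

theorem dblComm_apply (a b : ι) (v : A) : S.dblComm F E a b v
    = sgn (S.ε a) • S.lap F E (E a b * v)
    + sgn ((1 + S.ε a) * S.ε b) • S.lapComm F E b (S.lapComm F E a v)
    + sgn (S.ε a) • S.lapComm F E a (S.lapComm F E b v)
    + sgn (S.ε b) • (E a b * S.lap F E v) := rfl

theorem lap_apply (v : A) : S.lap F E v
    = (1/2 : ℚ) • ∑ c, sgn (S.ε c) • (S.D c (S.ham E c v) + F c * S.ham E c v) := by
  simp only [lap, ham_apply, LinearMap.smul_apply, LinearMap.sum_apply, LinearMap.add_apply,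
    LinearMap.comp_apply, L_apply, map_sum, Finset.mul_sum, ← Finset.sum_add_distrib,
    Finset.smul_sum]

theorem D_one (a : ι) : S.D a 1 = 0 := by
  have := S.D_leibniz a 1 S.one_mem
  simpa [sgn_zero] using this

theorem ham_one (a : ι) : S.ham E a 1 = 0 := by simp [ham_apply, D_one]

theorem lap_one : S.lap F E 1 = 0 := by simp [lap_apply, ham_one]

theorem ham_coord (a b : ι) : S.ham E a (S.coord b) = E a b := by
  simp [ham_apply, S.D_coord]

theorem ham_mul (hE : S.AntiSymp E Einv) (a : ι) {p : ZMod 2} {u : A} (hu : u ∈ S.hom p)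
    (v : A) : S.ham E a (u * v)
      = S.ham E a u * v + sgn ((S.ε a + 1) * p) • (u * S.ham E a v) := by
  simp only [ham_apply, Finset.sum_mul, Finset.mul_sum, Finset.smul_sum,
    ← Finset.sum_add_distrib]
  refine Finset.sum_congr rfl fun d _ => ?_
  have e : E a d * (u * S.D d v)
      = sgn ((S.ε a + S.ε d + 1) * p) • (u * (E a d * S.D d v)) := by
    rw [← mul_assoc, S.supercomm (hE.E_mem a d) hu, smul_mul_assoc, mul_assoc]
  simp only [S.D_leibniz d v hu, mul_add, mul_smul_comm, e, mul_assoc]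
  rcases par (S.ε a) with h | h <;> rcases par (S.ε d) with h' | h' <;>
    rcases par p with h'' | h'' <;>
    simp only [h, h', h'', mul_one, mul_zero, add_zero, zero_add, one_add_one',
      sgn_zero, sgn_one] <;> module

theorem ham_mem (hE : S.AntiSymp E Einv) (a : ι) {p : ZMod 2} {u : A} (hu : u ∈ S.hom p) :
    S.ham E a u ∈ S.hom (p + S.ε a + 1) := by
  rw [ham_apply]
  refine Submodule.sum_mem _ fun d _ => ?_
  have e : p + S.ε a + 1 = (S.ε a + S.ε d + 1) + (p + S.ε d) := by
    linear_combination (-1 : ZMod 2) * CharTwo.add_self_eq_zero (S.ε d)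
  exact e ▸ S.mul_mem (hE.E_mem a d) (S.D_mem d hu)

theorem lapCoord_mem (hE : S.AntiSymp E Einv) (hF : ∀ a, F a ∈ S.hom (S.ε a)) (a : ι) :
    S.lapCoord F E a ∈ S.hom (S.ε a + 1) := by
  refine Submodule.smul_mem _ _ (Submodule.sum_mem _ fun c _ => Submodule.smul_mem _ _
    (Submodule.add_mem _ ?_ ?_))
  · have e : S.ε a + 1 = (S.ε c + S.ε a + 1) + S.ε c := by
      linear_combination (-1 : ZMod 2) * CharTwo.add_self_eq_zero (S.ε c)
    exact e ▸ S.D_mem c (hE.E_mem c a)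
  · have e : S.ε a + 1 = S.ε c + (S.ε c + S.ε a + 1) := by
      linear_combination (-1 : ZMod 2) * CharTwo.add_self_eq_zero (S.ε c)
    exact e ▸ S.mul_mem (hF c) (hE.E_mem c a)

/-- The commutator `[Δ_F, Γ^a]` is the first-order operator `lapComm`, in applied form. -/
theorem lap_coord_mul (hE : S.AntiSymp E Einv) (hF : ∀ a, F a ∈ S.hom (S.ε a)) (a : ι)
    (v : A) : S.lap F E (S.coord a * v)
      = sgn (S.ε a) • (S.coord a * S.lap F E v) + S.lapComm F E a v := by
  have key : ∀ c, sgn (S.ε c) • (S.D c (S.ham E c (S.coord a * v))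
        + F c * S.ham E c (S.coord a * v))
      = sgn (S.ε a) • (S.coord a * (sgn (S.ε c) •
          (S.D c (S.ham E c v) + F c * S.ham E c v)))
        + (sgn (S.ε c) • (S.D c (E c a) + F c * E c a)) * v
        + (if c = a then (sgn (S.ε c) * sgn ((S.ε c + 1) * S.ε a)) • S.ham E c v else 0)
        + sgn (S.ε a) • (E a c * S.D c v) := by
    intro c
    have e1 : F c * (S.coord a * S.ham E c v)
        = sgn (S.ε c * S.ε a) • (S.coord a * (F c * S.ham E c v)) := by
      rw [← mul_assoc, S.supercomm (hF c) (S.coord_mem a), smul_mul_assoc, mul_assoc]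
    have e2 : (if c = a then (sgn (S.ε c) * sgn ((S.ε c + 1) * S.ε a)) • S.ham E c v else 0)
        = (sgn (S.ε c) * sgn ((S.ε c + 1) * S.ε a)) •
          (if c = a then S.ham E c v else 0) := by
      split_ifs <;> simp
    rw [e2, S.ham_mul hE c (S.coord_mem a), ham_coord]
    simp only [map_add, map_smul, D_coord_mul, mul_add, mul_smul_comm,
      S.D_leibniz c v (hE.E_mem c a), e1, hE.E_skew a c, add_mul, smul_mul_assoc, mul_assoc]
    rcases par (S.ε a) with h | h <;> rcases par (S.ε c) with h' | h' <;>
      simp only [h, h', mul_one, mul_zero, add_zero, zero_add, one_add_one',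
        sgn_zero, sgn_one] <;> module
  have e : sgn (S.ε a) * sgn ((S.ε a + 1) * S.ε a) = sgn (S.ε a) := by
    rcases par (S.ε a) with h | h <;> simp [h, sgn_zero, sgn_one, one_add_one']
  rw [lap_apply, Finset.sum_congr rfl (fun c _ => key c)]
  simp only [Finset.sum_add_distrib, Finset.sum_ite_eq', Finset.mem_univ, if_true, e]
  rw [← Finset.smul_sum, ← Finset.mul_sum, ← Finset.sum_mul, ← Finset.smul_sum, ← ham_apply,
    lapComm_apply, lapCoord, lap_apply, mul_smul_comm, smul_mul_assoc]
  module

/-- The commutator `[[Δ_F, Γ^a], Γ^b] = (-1)^{ε_a} E^{ab}`, in applied form. -/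
theorem lapComm_coord_mul (hE : S.AntiSymp E Einv) (hF : ∀ a, F a ∈ S.hom (S.ε a)) (a b : ι)
    (v : A) : S.lapComm F E a (S.coord b * v)
      = sgn (S.ε a) • (E a b * v)
        + sgn ((S.ε a + 1) * S.ε b) • (S.coord b * S.lapComm F E a v) := by
  have e1 : S.lapCoord F E a * (S.coord b * v)
      = sgn ((S.ε a + 1) * S.ε b) • (S.coord b * (S.lapCoord F E a * v)) := by
    rw [← mul_assoc, S.supercomm (S.lapCoord_mem hE hF a) (S.coord_mem b), smul_mul_assoc,
      mul_assoc]
  simp only [lapComm_apply, S.ham_mul hE a (S.coord_mem b), ham_coord, e1, mul_add,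
    mul_smul_comm]
  module

theorem lapComm_E_mul (hE : S.AntiSymp E Einv) (hF : ∀ a, F a ∈ S.hom (S.ε a)) (a b c : ι)
    (v : A) : S.lapComm F E a (E b c * v)
      = sgn (S.ε a) • (S.ham E a (E b c) * v)
        + sgn ((S.ε a + 1) * (S.ε b + S.ε c + 1)) • (E b c * S.lapComm F E a v) := by
  have e1 : S.lapCoord F E a * (E b c * v)
      = sgn ((S.ε a + 1) * (S.ε b + S.ε c + 1)) • (E b c * (S.lapCoord F E a * v)) := by
    rw [← mul_assoc, S.supercomm (S.lapCoord_mem hE hF a) (hE.E_mem b c), smul_mul_assoc,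
      mul_assoc]
  simp only [lapComm_apply, S.ham_mul hE a (hE.E_mem b c), e1, mul_add, mul_smul_comm]
  module

theorem gcomm_gcomm_lap_sq (hE : S.AntiSymp E Einv) (hF : ∀ a, F a ∈ S.hom (S.ε a))
    (a b : ι) :
    gcomm (0 + S.ε a) (S.ε b) (gcomm 0 (S.ε a) (S.lap F E ∘ₗ S.lap F E) (L (S.coord a)))
      (L (S.coord b)) = S.dblComm F E a b := by
  ext v
  simp only [gcomm_apply, LinearMap.comp_apply, L_apply, dblComm_apply, mul_add, mul_sub,
    S.lap_coord_mul hE hF, S.lapComm_coord_mul hE hF, map_add, map_smul, mul_smul_comm]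
  rcases par (S.ε a) with h | h <;> rcases par (S.ε b) with h' | h' <;>
    simp only [h, h', mul_one, mul_zero, add_zero, zero_add, one_add_one',
      sgn_zero, sgn_one] <;> module

theorem jacobi_ham (hJac : S.EJacobiId E) (a b c : ι) :
    sgn ((S.ε a + 1) * (S.ε c + 1)) • S.ham E a (E b c)
      + sgn ((S.ε b + 1) * (S.ε a + 1)) • S.ham E b (E c a)
      + sgn ((S.ε c + 1) * (S.ε b + 1)) • S.ham E c (E a b) = 0 := by
  have := hJac a b c
  simpa only [Finset.sum_add_distrib, ← Finset.smul_sum, ← ham_apply] using this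

/-- The triple commutators of `Δ_F²` with coordinates vanish: they reduce to the Jacobi
identity. -/
theorem gcomm_dblComm (hE : S.AntiSymp E Einv) (hF : ∀ a, F a ∈ S.hom (S.ε a))
    (hJac : S.EJacobiId E) (a b c : ι) :
    gcomm (S.ε a + S.ε b) (S.ε c) (S.dblComm F E a b) (L (S.coord c)) = 0 := by
  ext v
  have e1 : ∀ u, E a b * (S.coord c * u)
      = sgn ((S.ε a + S.ε b + 1) * S.ε c) • (S.coord c * (E a b * u)) := by
    intro u
    rw [← mul_assoc, S.supercomm (hE.E_mem a b) (S.coord_mem c), smul_mul_assoc, mul_assoc]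
  have hJ := congrArg (· * v) (S.jacobi_ham hJac a b c)
  simp only [add_mul, smul_mul_assoc, zero_mul] at hJ
  have e2 : S.ham E b (E c a) = - sgn ((S.ε a + 1) * (S.ε c + 1)) • S.ham E b (E a c) := by
    rw [hE.E_skew c a, map_smul, mul_comm (S.ε c + 1)]
  rw [e2, smul_mul_assoc] at hJ
  simp only [gcomm_apply, L_apply, dblComm_apply, mul_add, e1,
    S.lap_coord_mul hE hF, S.lapComm_coord_mul hE hF, S.lapComm_E_mul hE hF, map_add, map_smul,
    mul_smul_comm, LinearMap.zero_apply]
  rcases par (S.ε a) with h | h <;> rcases par (S.ε b) with h' | h' <;>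
    rcases par (S.ε c) with h'' | h'' <;>
    simp only [h, h', h'', mul_one, mul_zero, add_zero, zero_add, one_add_one',
      sgn_zero, sgn_one] at hJ ⊢ <;>
    first
    | linear_combination (norm := module) (1 : ℚ) • hJ
    | linear_combination (norm := module) (-1 : ℚ) • hJ


/-- The Jacobi identity solved for `(Γ^c, E^{ab})`. -/
theorem ham_E (hE : S.AntiSymp E Einv) (hJac : S.EJacobiId E) (a b c : ι) :
    S.ham E c (E a b) = sgn ((S.ε a + 1) * (S.ε c + 1)) • S.ham E a (E c b)
      - sgn ((S.ε c + S.ε a) * (S.ε b + 1)) • S.ham E b (E c a) := by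
  have hJ := S.jacobi_ham hJac a b c
  rw [hE.E_skew b c, map_smul] at hJ
  rcases par (S.ε a) with h | h <;> rcases par (S.ε b) with h' | h' <;>
    rcases par (S.ε c) with h'' | h'' <;>
    simp only [h, h', h'', mul_one, mul_zero, zero_add, add_zero, one_add_one',
      sgn_zero, sgn_one] at hJ ⊢ <;>
    first
    | linear_combination (norm := module) (1 : ℚ) • hJ
    | linear_combination (norm := module) (-1 : ℚ) • hJ

theorem D_ham (hE : S.AntiSymp E Einv) (a c : ι) (u : A) :
    S.D c (S.ham E a u) = ∑ d, S.D c (E a d) * S.D d u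
      + sgn (S.ε c * (S.ε a + 1)) • S.ham E a (S.D c u) := by
  simp only [ham_apply, map_sum, Finset.smul_sum, ← Finset.sum_add_distrib]
  refine Finset.sum_congr rfl fun d _ => ?_
  rw [S.D_leibniz c _ (hE.E_mem a d), S.D_comm c d, mul_smul_comm]
  rcases par (S.ε a) with h | h <;> rcases par (S.ε d) with h' | h' <;>
    rcases par (S.ε c) with h'' | h'' <;>
    simp only [h, h', h'', mul_one, mul_zero, add_zero, zero_add, one_add_one',
      sgn_zero, sgn_one] <;> module

/-- The part of `[[Δ_F², Γ^a], Γ^b]` that is quadratic in the first derivatives of `E` drops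
out, being graded antisymmetric. -/
theorem sum_DE_DE (hE : S.AntiSymp E Einv) (a b : ι) :
    ∑ c, sgn (S.ε c * S.ε a) • ∑ d, S.D c (E a d) * S.D d (E c b)
      + sgn (S.ε a * S.ε b) •
        ∑ c, sgn (S.ε c * S.ε b) • ∑ d, S.D c (E b d) * S.D d (E c a) = 0 := by
  simp only [Finset.smul_sum]
  rw [Finset.sum_comm (f := fun c d => sgn (S.ε a * S.ε b) •
    sgn (S.ε c * S.ε b) • (S.D c (E b d) * S.D d (E c a)))]
  simp only [← Finset.sum_add_distrib]
  refine Finset.sum_eq_zero fun c _ => Finset.sum_eq_zero fun d _ => ?_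
  rw [S.supercomm (S.D_mem c (hE.E_mem a d)) (S.D_mem d (hE.E_mem c b)), hE.E_skew c b,
    hE.E_skew a d]
  simp only [map_smul, mul_smul_comm, smul_mul_assoc]
  rcases par (S.ε a) with h | h <;> rcases par (S.ε d) with h' | h' <;>
    rcases par (S.ε c) with h'' | h'' <;> rcases par (S.ε b) with h3 | h3 <;>
    simp only [h, h', h'', h3, mul_one, mul_zero, add_zero, zero_add, one_add_one',
      sgn_zero, sgn_one] <;> module

/-- The raised curvature is the graded symmetrization of `∑_c (-1)^{ε_c} (Γ^a, F_c) E^{cb}`. -/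
theorem curvUp_eq (hE : S.AntiSymp E Einv) (hF : ∀ a, F a ∈ S.hom (S.ε a)) (a b : ι) :
    S.curvUp E F a b = ∑ c, sgn (S.ε c) • (S.ham E a (F c) * E c b)
      + sgn (S.ε a * S.ε b) • ∑ c, sgn (S.ε c) • (S.ham E b (F c) * E c a) := by
  have key : ∀ d c, sgn (S.ε c) • (E a d * (S.curv F d c * E c b))
      = sgn (S.ε c) • (E a d * S.D d (F c) * E c b)
        + sgn (S.ε a * S.ε b) • (sgn (S.ε d) • (E b c * S.D c (F d) * E d a)) := by
    intro d c
    have hX : S.D c (F d) ∈ S.hom (S.ε d + S.ε c) := S.D_mem c (hF d)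
    have e : E b c * S.D c (F d) * E d a = sgn ((S.ε b + S.ε c + 1) * (S.ε d + S.ε c)
          + (S.ε b + S.ε c + 1 + (S.ε d + S.ε c)) * (S.ε d + S.ε a + 1)) •
        (sgn ((S.ε b + 1) * (S.ε c + 1)) * sgn ((S.ε d + 1) * (S.ε a + 1))) •
          (E a d * (S.D c (F d) * E c b)) := by
      rw [S.supercomm (S.mul_mem (hE.E_mem b c) hX) (hE.E_mem d a),
        S.supercomm (hE.E_mem b c) hX, hE.E_skew b c, hE.E_skew d a, sgn_add]
      simp only [mul_smul_comm, smul_mul_assoc]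
      module
    rw [e, curv]
    simp only [sub_mul, mul_sub, smul_mul_assoc, mul_smul_comm, mul_assoc]
    rcases par (S.ε a) with h | h <;> rcases par (S.ε d) with h' | h' <;>
      rcases par (S.ε c) with h'' | h'' <;> rcases par (S.ε b) with h3 | h3 <;>
      simp only [h, h', h'', h3, mul_one, mul_zero, add_zero, zero_add, one_add_one',
        sgn_zero, sgn_one] <;> module
  rw [curvUp, Finset.sum_congr rfl fun d _ => Finset.sum_congr rfl fun c _ => key d c]
  simp only [Finset.sum_add_distrib, ham_apply, Finset.sum_mul, Finset.smul_sum]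
  rw [Finset.sum_comm]

/-- The function that `[[Δ_F², Γ^a], Γ^b]` is the multiplication by. The Jacobi identity trades
`Δ_F E^{ab}` for derivatives along the Hamiltonian vector fields of `Γ^a` and `Γ^b`, after which
only the derivatives of `F` survive. -/
theorem dblComm_one (hE : S.AntiSymp E Einv) (hF : ∀ a, F a ∈ S.hom (S.ε a))
    (hJac : S.EJacobiId E) (a b : ι) :
    S.dblComm F E a b 1 = (1/2 : ℚ) • S.curvUp E F a b := by
  have key : ∀ c, sgn (S.ε a) • (sgn (S.ε c) • (S.D c (S.ham E c (E a b))
          + F c * S.ham E c (E a b)))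
        + sgn (S.ε c) • S.ham E a (S.D c (E c b) + F c * E c b)
        + sgn (S.ε a * S.ε b) • (sgn (S.ε c) • S.ham E b (S.D c (E c a) + F c * E c a))
      = sgn (S.ε c) • (S.ham E a (F c) * E c b)
        + sgn (S.ε a * S.ε b) • (sgn (S.ε c) • (S.ham E b (F c) * E c a))
        - (sgn (S.ε c * S.ε a) • (∑ d, S.D c (E a d) * S.D d (E c b))
          + sgn (S.ε a * S.ε b) •
            (sgn (S.ε c * S.ε b) • ∑ d, S.D c (E b d) * S.D d (E c a))) := by
    intro c
    rw [S.ham_E hE hJac a b c]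
    simp only [map_sub, map_add, map_smul, S.D_ham hE, S.ham_mul hE _ (hF c), mul_sub,
      mul_smul_comm]
    rcases par (S.ε a) with h | h <;> rcases par (S.ε b) with h' | h' <;>
      rcases par (S.ε c) with h'' | h'' <;>
      simp only [h, h', h'', mul_one, mul_zero, add_zero, zero_add, one_add_one',
        sgn_zero, sgn_one] <;> module
  have hsum := Finset.sum_congr (rfl : (Finset.univ : Finset ι) = _) fun c _ => key c
  simp only [Finset.sum_add_distrib, Finset.sum_sub_distrib, ← Finset.smul_sum] at hsum
  rw [S.sum_DE_DE hE a b, ← S.curvUp_eq hE hF a b, sub_zero] at hsum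
  have hm : ∀ x y, S.ham E x (S.lapCoord F E y)
      = (1/2 : ℚ) • ∑ c, sgn (S.ε c) • S.ham E x (S.D c (E c y) + F c * E c y) := by
    intro x y
    simp only [lapCoord, map_smul, map_sum]
  have hcomm := S.supercomm (S.lapCoord_mem hE hF a) (S.lapCoord_mem hE hF b)
  rw [← hsum]
  simp only [dblComm_apply, lapComm_apply, ham_one, mul_one, smul_zero, zero_add, lap_one,
    mul_zero, add_zero, hm, hcomm]
  rw [lap_apply]
  rcases par (S.ε a) with h | h <;> rcases par (S.ε b) with h' | h' <;>
    simp only [h, h', mul_one, mul_zero, add_zero, zero_add, one_add_one',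
      sgn_zero, sgn_one] <;> module

theorem lap_comp_mem (hE : S.AntiSymp E Einv) (hF : ∀ a, F a ∈ S.hom (S.ε a)) {p r : ZMod 2}
    {T : A →ₗ[ℚ] A} (hT : T ∈ S.diffOp p) (hr : r = p + 1) :
    S.lap F E ∘ₗ T ∈ S.diffOp r := by
  have e : S.lap F E ∘ₗ T = (1/2 : ℚ) • ∑ a, ∑ b, sgn (S.ε a) •
      (S.D a ∘ₗ L (E a b) ∘ₗ S.D b ∘ₗ T + L (F a) ∘ₗ L (E a b) ∘ₗ S.D b ∘ₗ T) := by
    ext v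
    simp [lap]
  rw [e]
  refine Submodule.smul_mem _ _ (Submodule.sum_mem _ fun a _ => Submodule.sum_mem _ fun b _ =>
    Submodule.smul_mem _ _ ?_)
  have h1 : L (E a b) ∘ₗ S.D b ∘ₗ T ∈ S.diffOp (S.ε a + 1 + p) := by
    refine S.L_comp_mem (hE.E_mem a b) (S.D_comp_mem b hT rfl) ?_
    linear_combination (-1 : ZMod 2) * CharTwo.add_self_eq_zero (S.ε b)
  have e2 : r = S.ε a + (S.ε a + 1 + p) := by
    rw [hr]
    linear_combination (-1 : ZMod 2) * CharTwo.add_self_eq_zero (S.ε a)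
  exact Submodule.add_mem _ (S.D_comp_mem a h1 e2) (S.L_comp_mem (hF a) h1 e2)

theorem lap_sq_mem (hE : S.AntiSymp E Einv) (hF : ∀ a, F a ∈ S.hom (S.ε a)) :
    S.lap F E ∘ₗ S.lap F E ∈ S.diffOp 0 :=
  S.lap_comp_mem hE hF (p := 1) (S.lap_comp_mem hE hF S.id_mem (zero_add 1).symm)
    one_add_one'.symm

theorem curv_mem (hF : ∀ a, F a ∈ S.hom (S.ε a)) (a b : ι) :
    S.curv F a b ∈ S.hom (S.ε a + S.ε b) :=
  Submodule.sub_mem _ (add_comm (S.ε b) (S.ε a) ▸ S.D_mem a (hF b))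
    (Submodule.smul_mem _ _ (S.D_mem b (hF a)))

theorem curvUp_mem (hE : S.AntiSymp E Einv) (hF : ∀ a, F a ∈ S.hom (S.ε a)) (a d : ι) :
    S.curvUp E F a d ∈ S.hom (S.ε a + S.ε d) := by
  refine Submodule.sum_mem _ fun b _ => Submodule.sum_mem _ fun c _ =>
    Submodule.smul_mem _ _ ?_
  have e : S.ε a + S.ε d = (S.ε a + S.ε b + 1) + ((S.ε b + S.ε c) + (S.ε c + S.ε d + 1)) := by
    linear_combination (-1 : ZMod 2) * (CharTwo.add_self_eq_zero (S.ε b)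
      + CharTwo.add_self_eq_zero (S.ε c) + CharTwo.add_self_eq_zero (1 : ZMod 2))
  exact e ▸ S.mul_mem (hE.E_mem a b) (S.mul_mem (S.curv_mem hF b c) (hE.E_mem c d))

theorem curvUp_symm (hE : S.AntiSymp E Einv) (hF : ∀ a, F a ∈ S.hom (S.ε a)) (a b : ι) :
    S.curvUp E F b a = sgn (S.ε a * S.ε b) • S.curvUp E F a b := by
  rw [S.curvUp_eq hE hF a b, S.curvUp_eq hE hF b a]
  rcases par (S.ε a) with h | h <;> rcases par (S.ε b) with h' | h' <;>
    simp only [h, h', mul_one, mul_zero, sgn_zero, sgn_one] <;> module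

/-- Second-order symbol of `Δ_F²` in the coordinates. -/
theorem gcomm_gcomm_lap_sq_eq (hE : S.AntiSymp E Einv) (hF : ∀ a, F a ∈ S.hom (S.ε a))
    (hJac : S.EJacobiId E) (a b : ι) :
    gcomm (0 + S.ε a) (S.ε b) (gcomm 0 (S.ε a) (S.lap F E ∘ₗ S.lap F E) (L (S.coord a)))
      (L (S.coord b)) = L ((1/2 : ℚ) • S.curvUp E F a b) := by
  rw [S.gcomm_gcomm_lap_sq hE hF, ← S.dblComm_one hE hF hJac]
  refine S.eq_L_of_comm_coord (p := S.ε a + S.ε b) ?_ (S.gcomm_dblComm hE hF hJac a b)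
  have hL : ∀ {p : ZMod 2} {h : A}, h ∈ S.hom p → L h ∈ S.diffOp p := fun hh =>
    S.symb_le 0 _ (S.L_mem_symb hh)
  have hham : ∀ (x : ι) {p r : ZMod 2} {T : A →ₗ[ℚ] A}, T ∈ S.diffOp p → r = S.ε x + 1 + p →
      S.lapComm F E x ∘ₗ T ∈ S.diffOp r := by
    intro x p r T hT hr
    have e : S.lapComm F E x ∘ₗ T = sgn (S.ε x) • ∑ d, L (E x d) ∘ₗ S.D d ∘ₗ T
        + L (S.lapCoord F E x) ∘ₗ T := by
      ext v
      simp [lapComm, ham]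
    rw [e]
    refine Submodule.add_mem _ (Submodule.smul_mem _ _ (Submodule.sum_mem _ fun d _ =>
      S.L_comp_mem (hE.E_mem x d) (S.D_comp_mem d hT rfl) ?_))
      (S.L_comp_mem (S.lapCoord_mem hE hF x) hT hr)
    rw [hr]
    linear_combination (-1 : ZMod 2) * CharTwo.add_self_eq_zero (S.ε d)
  have hlapComm : ∀ x, S.lapComm F E x ∈ S.diffOp (S.ε x + 1) := fun x =>
    hham x S.id_mem (add_zero _).symm
  have hlap : S.lap F E ∈ S.diffOp 1 := S.lap_comp_mem hE hF S.id_mem (zero_add 1).symm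
  have h2 : (1 : ZMod 2) + 1 = 0 := one_add_one'
  refine Submodule.add_mem _ (Submodule.add_mem _ (Submodule.add_mem _ ?_ ?_) ?_) ?_ <;>
    refine Submodule.smul_mem _ _ ?_
  · exact S.lap_comp_mem hE hF (hL (hE.E_mem a b)) (by linear_combination -h2)
  · exact hham b (hlapComm a) (by linear_combination -h2)
  · exact hham a (hlapComm b) (by linear_combination -h2)
  · exact S.L_comp_mem (hE.E_mem a b) hlap (by linear_combination -h2)

/-- Second-order symbol of `R^{cd} ∂_d ∂_c` in the coordinates. -/
theorem gcomm_gcomm_curvUp (hE : S.AntiSymp E Einv) (hF : ∀ a, F a ∈ S.hom (S.ε a))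
    (a b : ι) :
    gcomm (0 + S.ε a) (S.ε b) (gcomm 0 (S.ε a)
        (∑ c, ∑ d, L (S.curvUp E F c d) ∘ₗ S.D d ∘ₗ S.D c) (L (S.coord a)))
      (L (S.coord b)) = L ((2 : ℚ) • S.curvUp E F a b) := by
  set T := ∑ c, ∑ d, L (S.curvUp E F c d) ∘ₗ S.D d ∘ₗ S.D c with hT
  have key : ∀ v c d, S.curvUp E F c d * S.D d (S.D c (S.coord a * v))
      = S.coord a * (S.curvUp E F c d * S.D d (S.D c v))
        + (if c = a then S.curvUp E F c d * S.D d v else 0)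
        + (if d = a then sgn (S.ε c * S.ε a) • (S.curvUp E F c d * S.D c v) else 0) := by
    intro v c d
    have e : ∀ u, S.curvUp E F c d * (S.coord a * u)
        = sgn ((S.ε c + S.ε d) * S.ε a) • (S.coord a * (S.curvUp E F c d * u)) := by
      intro u
      rw [← mul_assoc, S.supercomm (S.curvUp_mem hE hF c d) (S.coord_mem a), smul_mul_assoc,
        mul_assoc]
    have e1 : S.curvUp E F c d * S.D d (if c = a then v else 0)
        = if c = a then S.curvUp E F c d * S.D d v else 0 := by
      split_ifs <;> simp
    have e2 : (if d = a then sgn (S.ε c * S.ε a) • (S.curvUp E F c d * S.D c v) else 0)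
        = sgn (S.ε c * S.ε a) • (S.curvUp E F c d * (if d = a then S.D c v else 0)) := by
      split_ifs <;> simp
    rw [e2]
    simp only [D_coord_mul, map_add, map_smul, mul_add, mul_smul_comm, e, e1]
    rcases par (S.ε a) with h | h <;> rcases par (S.ε c) with h' | h' <;>
      rcases par (S.ε d) with h'' | h'' <;>
      simp only [h, h', h'', mul_one, mul_zero, add_zero, zero_add, one_add_one',
        sgn_zero, sgn_one] <;> module
  have hsym : ∀ c, sgn (S.ε c * S.ε a) • S.curvUp E F c a = S.curvUp E F a c := fun c =>
    (S.curvUp_symm hE hF c a).symm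
  have h1 : gcomm 0 (S.ε a) T (L (S.coord a))
      = (2 : ℚ) • ∑ d, L (S.curvUp E F a d) ∘ₗ S.D d := by
    ext v
    simp only [hT, gcomm_apply, LinearMap.sum_apply, LinearMap.smul_apply,
      LinearMap.comp_apply, L_apply, key v, Finset.sum_add_distrib]
    rw [Finset.sum_comm (f := fun c d => if c = a then S.curvUp E F c d * S.D d v else 0)]
    simp only [Finset.sum_ite_eq', Finset.mem_univ, if_true, Finset.mul_sum,
      ← smul_mul_assoc, hsym, zero_mul, sgn_zero, one_smul]
    module
  ext v
  have h2 : ∀ d, S.curvUp E F a d * S.D d (S.coord b * v)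
      = sgn (S.ε a * S.ε b) • (S.coord b * (S.curvUp E F a d * S.D d v))
        + if d = b then S.curvUp E F a d * v else 0 := by
    intro d
    have e : ∀ u, S.curvUp E F a d * (S.coord b * u)
        = sgn ((S.ε a + S.ε d) * S.ε b) • (S.coord b * (S.curvUp E F a d * u)) := by
      intro u
      rw [← mul_assoc, S.supercomm (S.curvUp_mem hE hF a d) (S.coord_mem b), smul_mul_assoc,
        mul_assoc]
    rw [D_coord_mul, mul_add, mul_smul_comm, e]
    have e2 : S.curvUp E F a d * (if d = b then v else 0)
        = if d = b then S.curvUp E F a d * v else 0 := by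
      split_ifs <;> simp
    rw [e2]
    rcases par (S.ε a) with h | h <;> rcases par (S.ε b) with h' | h' <;>
      rcases par (S.ε d) with h'' | h'' <;>
      simp only [h, h', h'', mul_one, mul_zero, add_zero, zero_add, one_add_one',
        sgn_zero, sgn_one] <;> module
  rw [h1]
  simp only [gcomm_apply, LinearMap.sum_apply, LinearMap.smul_apply, LinearMap.comp_apply,
    L_apply, h2, Finset.sum_add_distrib, Finset.sum_ite_eq', Finset.mem_univ, if_true,
    ← Finset.mul_sum, ← Finset.smul_sum, smul_mul_assoc, mul_smul_comm, zero_add]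
  module

theorem curvUp_mem_diffOp (hE : S.AntiSymp E Einv) (hF : ∀ a, F a ∈ S.hom (S.ε a)) :
    ∑ c, ∑ d, L (S.curvUp E F c d) ∘ₗ S.D d ∘ₗ S.D c ∈ S.diffOp 0 := by
  refine Submodule.sum_mem _ fun c _ => Submodule.sum_mem _ fun d _ => ?_
  refine S.L_comp_mem (S.curvUp_mem hE hF c d)
    (S.D_comp_mem d (S.D_comp_mem c S.id_mem rfl) rfl) ?_
  linear_combination (-1 : ZMod 2) * (CharTwo.add_self_eq_zero (S.ε c)
    + CharTwo.add_self_eq_zero (S.ε d))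

/-- Lowering the indices of the raised curvature with the inverse matrix. -/
theorem curv_of_curvUp (hE : S.AntiSymp E Einv) (x y : ι) :
    S.curv F x y = sgn (S.ε y) • ∑ a, ∑ d, Einv x a * S.curvUp E F a d * Einv d y := by
  have e : ∑ a, ∑ d, Einv x a * S.curvUp E F a d * Einv d y
      = ∑ b, ∑ c, sgn (S.ε c) • ((∑ a, Einv x a * E a b) * S.curv F b c *
          (∑ d, E c d * Einv d y)) := by
    simp only [curvUp, Finset.mul_sum, Finset.sum_mul, Finset.smul_sum, mul_smul_comm,
      smul_mul_assoc, mul_assoc]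
    -- move the summation over `b, c` in front of the one over `a, d`
    calc _ = ∑ a, ∑ b, ∑ c, ∑ d, sgn (S.ε c) •
            (Einv x a * (E a b * (S.curv F b c * (E c d * Einv d y)))) := by
          refine Finset.sum_congr rfl fun a _ => ?_
          rw [Finset.sum_comm]
          exact Finset.sum_congr rfl fun b _ => Finset.sum_comm
      _ = ∑ b, ∑ c, ∑ a, ∑ d, sgn (S.ε c) •
            (Einv x a * (E a b * (S.curv F b c * (E c d * Einv d y)))) := by
          rw [Finset.sum_comm]
          exact Finset.sum_congr rfl fun b _ => Finset.sum_comm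
      _ = _ := by
          refine Finset.sum_congr rfl fun b _ => Finset.sum_congr rfl fun c _ => ?_
          exact Finset.sum_comm
  have hs : sgn (S.ε y) * sgn (S.ε y) = 1 := by
    rcases par (S.ε y) with h | h <;> simp [h, sgn_zero, sgn_one]
  rw [e]
  simp only [hE.inv_mul, hE.mul_inv]
  simp [smul_smul, hs]

end

end SuperAlg

namespace SuperAlg

/-- Granted the Jacobi identity, the second-order terms of `Δ_F²` equal
`(1/4) R^{AB} ∂_B ∂_A` (i.e. their difference is at most first order); consequently, in
the non-degenerate case the second-order terms of `Δ_F²` vanish iff `R_{AB} = 0`. -/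
theorem second_order_terms_of_lapF_squared
    {ι : Type} [Fintype ι] [DecidableEq ι] {A : Type} [Ring A] [Algebra ℚ A]
    (S : SuperAlg ι A) (E Einv : ι → ι → A) (F : ι → A)
    (hE : S.AntiSymp E Einv) (hF : ∀ a, F a ∈ S.hom (S.ε a))
    (hJac : S.EJacobiId E) :
    S.IsFirstOrder 0
      ((S.lap F E) ∘ₗ (S.lap F E)
        - (1/4 : ℚ) • ∑ a, ∑ b, L (S.curvUp E F a b) ∘ₗ S.D b ∘ₗ S.D a)
    ∧ (S.IsFirstOrder 0 ((S.lap F E) ∘ₗ (S.lap F E)) ↔ ∀ a b, S.curv F a b = 0) := by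
  refine ⟨S.isFirstOrder_of_coord ?_ fun a b => ?_, fun h => ?_, fun h => ?_⟩
  · exact Submodule.sub_mem _ (S.lap_sq_mem hE hF)
      (Submodule.smul_mem _ _ (S.curvUp_mem_diffOp hE hF))
  · rw [gcomm_sub_left, gcomm_sub_left, gcomm_smul_left, gcomm_smul_left,
      S.gcomm_gcomm_lap_sq_eq hE hF hJac, S.gcomm_gcomm_curvUp hE hF]
    ext v
    simp only [LinearMap.sub_apply, LinearMap.smul_apply, L_apply, smul_mul_assoc,
      LinearMap.zero_apply]
    module
  · have hR : ∀ a b, S.curvUp E F a b = 0 := by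
      intro a b
      have h0 := h _ _ _ _ (S.coord_mem a) (S.coord_mem b)
      rw [S.gcomm_gcomm_lap_sq_eq hE hF hJac] at h0
      simpa [L_apply] using LinearMap.congr_fun h0 1
    intro x y
    simp [S.curv_of_curvUp hE x y, hR]
  · refine S.isFirstOrder_of_coord (S.lap_sq_mem hE hF) fun a b => ?_
    rw [S.gcomm_gcomm_lap_sq_eq hE hF hJac]
    ext v
    simp [L_apply, curvUp, h]

end SuperAlg
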